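/- Let φ_1, …, φ_n : ℝ → ℂ be compactly supported functions and let f be an analytic function belonging to the shift-invariant space V_Φ generated by φ_1, …, φ_n. Then there exist s ∈ ℕ, complex numbers λ_1, …, λ_s pairwise distinct modulo 2πi, integers d_1, …, d_s ∈ ℕ₀, and 1-periodic analytic functions π_{j,k} : ℝ → ℂ (1 ≤ j ≤ s, 0 ≤ k ≤ d_j) such that f(t) = Σ_{j=1}^s e^{λ_j t} Σ_{k=0}^{d_j} π_{j,k}(t)·t^k for all t ∈ ℝ. -/

import Mathlib

/-!
The analytic functions in `V_Φ` form a space `W` stable under the shift `g ↦ g (· + 1)`. On `[0, 1]`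
only finitely many translates of the `φ_j` are nonzero, and an analytic function is determined by
its values there, so `W` is finite-dimensional and `f` is a sum of generalized eigenvectors of the
shift in `W`. If `g` is one for the eigenvalue `e^λ`, then `e^{-λt} g(t)` is annihilated by a power
of the forward difference, hence is a polynomial in `t` with 1-periodic analytic coefficients.
-/

open Function Module
open scoped fwdDiff Pointwise

section ForwardDifference

variable {M R G : Type*} [AddCommMonoid M] [AddCommGroup G] {h : M}

theorem fwdDiff_eq_zero_iff_periodic {f : M → G} : Δ_[h] f = 0 ↔ Periodic f h := by
  simp only [funext_iff, fwdDiff, Pi.zero_apply, sub_eq_zero, Periodic]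

theorem fwdDiff_iter_sub (f g : M → G) (N : ℕ) :
    (Δ_[h])^[N] (f - g) = (Δ_[h])^[N] f - (Δ_[h])^[N] g := by
  simpa only [fwdDiff_aux.coe_fwdDiffₗ_pow] using map_sub (fwdDiff_aux.fwdDiffₗ M G h ^ N) f g

theorem fwdDiff_iter_smul_periodic [Ring R] [Module R G] {p : M → G} (hp : Periodic p h)
    (q : M → R) (N : ℕ) : (Δ_[h])^[N] (q • p) = (Δ_[h])^[N] q • p := by
  have hsemiconj : Semiconj (fun q : M → R ↦ q • p) Δ_[h] Δ_[h] := fun q ↦ by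
    simp only [fwdDiff_smul, fwdDiff_eq_zero_iff_periodic.2 hp, smul_zero, add_zero]
  exact (hsemiconj.iterate_right N q).symm

end ForwardDifference

section PeriodicPolynomial

variable {𝕜 E : Type*} [NontriviallyNormedField 𝕜] [NormedAddCommGroup E] [NormedSpace 𝕜 E]

theorem analyticAt_comp_add_right {g : 𝕜 → E} (hg : ∀ x, AnalyticAt 𝕜 g x) (h x : 𝕜) :
    AnalyticAt 𝕜 (fun t ↦ g (t + h)) x :=
  (hg (x + h)).fun_comp (f := (· + h)) (by fun_prop)

theorem analyticAt_fwdDiff_iter {g : 𝕜 → E} (hg : ∀ x, AnalyticAt 𝕜 g x) (h : 𝕜) (N : ℕ) :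
    ∀ x, AnalyticAt 𝕜 ((Δ_[h])^[N] g) x := by
  induction N with
  | zero => exact hg
  | succ N ih =>
    intro x
    rw [iterate_succ_apply']
    exact (analyticAt_comp_add_right ih h x).sub (ih x)

theorem exists_periodic_coeff_of_fwdDiff_iter_eq_zero [CharZero 𝕜] {N : ℕ} {g : 𝕜 → E}
    (hg : ∀ x, AnalyticAt 𝕜 g x) (hΔ : (Δ_[1])^[N] g = 0) :
    ∃ π : ℕ → 𝕜 → E, (∀ k, Periodic (π k) 1 ∧ ∀ x, AnalyticAt 𝕜 (π k) x) ∧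
      ∀ t, g t = ∑ k ∈ Finset.range N, t ^ k • π k t := by
  induction N generalizing g with
  | zero => exact ⟨0, fun k ↦ ⟨fun _ ↦ rfl, fun _ ↦ analyticAt_const⟩, congrFun hΔ⟩
  | succ N ih =>
    -- As `Δ^N t^N = N!`, this is the only possible coefficient of `t ^ N`.
    let p : 𝕜 → E := (N.factorial : 𝕜)⁻¹ • (Δ_[1])^[N] g
    have hp : Periodic p 1 := by
      rw [← fwdDiff_eq_zero_iff_periodic, fwdDiff_const_smul, ← iterate_succ_apply' (Δ_[1]), hΔ,
        smul_zero]
    have hp_an (x) : AnalyticAt 𝕜 p x := (analyticAt_fwdDiff_iter hg 1 N x).const_smul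
    let r : 𝕜 → E := g - (fun t : 𝕜 ↦ t ^ N) • p
    have hr_an (x) : AnalyticAt 𝕜 r x := (hg x).sub ((analyticAt_id.pow N).smul (hp_an x))
    have hr : (Δ_[1])^[N] r = 0 := by
      rw [fwdDiff_iter_sub, fwdDiff_iter_smul_periodic hp, fwdDiff_iter_eq_factorial, sub_eq_zero]
      ext t
      exact (smul_inv_smul₀ (Nat.cast_ne_zero.2 N.factorial_ne_zero) _).symm
    obtain ⟨π, hπ, hsum⟩ := ih hr_an hr
    refine ⟨update π N p, fun k ↦ ?_, fun t ↦ ?_⟩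
    · obtain rfl | hk := eq_or_ne k N
      · simpa only [update_self] using And.intro hp hp_an
      · simpa only [update_of_ne hk] using hπ k
    · calc g t = r t + t ^ N • p t := (sub_add_cancel _ _).symm
        _ = ∑ k ∈ Finset.range (N + 1), t ^ k • update π N p k t := by
          rw [hsum, Finset.sum_range_succ, update_self]
          congr! 3 with k hk
          rw [update_of_ne (Finset.mem_range.1 hk).ne]

end PeriodicPolynomial

section GeneralizedEigenvectors

variable {K V : Type*} [Field K] [AddCommGroup V] [Module K V] {T : End K V}

theorem le_iSup_inf_maxGenEigenspace [IsAlgClosed K] {W : Submodule K V} [FiniteDimensional K W]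
    (hTW : ∀ x ∈ W, T x ∈ W) : W ≤ ⨆ μ, W ⊓ T.maxGenEigenspace μ := by
  calc W = (⊤ : Submodule K W).map W.subtype := W.map_subtype_top.symm
    _ = (⨆ μ, End.maxGenEigenspace (T.restrict hTW) μ).map W.subtype := by
      rw [End.iSup_maxGenEigenspace_eq_top]
    _ ≤ ⨆ μ, W ⊓ T.maxGenEigenspace μ := by
      simp only [Submodule.map_iSup, End.maxGenEigenspace, End.genEigenspace_restrict,
        Submodule.map_comap_subtype, le_refl]

theorem maxGenEigenspace_zero_eq_bot (hT : Injective T) : T.maxGenEigenspace 0 = ⊥ := by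
  refine (Submodule.eq_bot_iff _).2 fun x hx ↦ ?_
  obtain ⟨k, hk⟩ := (End.mem_maxGenEigenspace ..).1 hx
  rw [zero_smul, sub_zero, End.pow_apply] at hk
  exact hT.iterate k (hk.trans (iterate_map_zero T k).symm)

theorem exists_sum_genEigenvectors_of_injective [IsAlgClosed K] (hT : Injective T)
    {W : Submodule K V} [FiniteDimensional K W] (hTW : ∀ x ∈ W, T x ∈ W) {x : V} (hx : x ∈ W) :
    ∃ (S : Finset K) (u : K → V), (∀ μ ∈ S, μ ≠ 0) ∧
      (∀ μ ∈ S, u μ ∈ W ∧ u μ ∈ T.maxGenEigenspace μ) ∧ x = ∑ μ ∈ S, u μ := by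
  obtain ⟨u, hu, rfl⟩ :=
    (Submodule.mem_iSup_iff_exists_finsupp _ _).1 (le_iSup_inf_maxGenEigenspace hTW hx)
  refine ⟨u.support, u, ?_, fun μ _ ↦ hu μ, rfl⟩
  rintro μ hμ rfl
  have hu₀ : u 0 ∈ T.maxGenEigenspace 0 := (hu 0).2
  rw [maxGenEigenspace_zero_eq_bot hT, Submodule.mem_bot] at hu₀
  exact Finsupp.mem_support_iff.1 hμ hu₀

end GeneralizedEigenvectors

section UnitShift

variable {E : Type*} [AddCommGroup E] [Module ℂ E]

variable (E) in
/-- The shift operator `g ↦ g (· + 1)` on functions on `ℝ`. -/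
def unitShift : End ℂ (ℝ → E) :=
  LinearMap.funLeft ℂ E (· + 1)

theorem unitShift_injective : Injective (unitShift E) :=
  LinearMap.funLeft_injective_of_surjective _ _ _ (add_right_surjective 1)

theorem fwdDiff_exp_neg_smul (l : ℂ) (g : ℝ → E) :
    Δ_[1] ((fun t : ℝ ↦ Complex.exp (-l * t)) • g) = (fun t : ℝ ↦ Complex.exp (-l * t)) •
      (Complex.exp (-l) • (unitShift E - Complex.exp l • (1 : End ℂ (ℝ → E)))) g := by
  ext t
  have hexp : Complex.exp (-l * (t + 1 : ℝ)) = Complex.exp (-l * t) * Complex.exp (-l) := by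
    rw [Complex.ofReal_add, Complex.ofReal_one, mul_add, mul_one, Complex.exp_add]
  calc Complex.exp (-l * (t + 1 : ℝ)) • g (t + 1) - Complex.exp (-l * t) • g t
      = Complex.exp (-l * t) • (Complex.exp (-l) • g (t + 1) - g t) := by
        rw [hexp, mul_smul, smul_sub]
    _ = Complex.exp (-l * t) • (Complex.exp (-l) • (g (t + 1) - Complex.exp l • g t)) := by
        rw [smul_sub (Complex.exp (-l)), smul_smul (Complex.exp (-l)), ← Complex.exp_add,
          neg_add_cancel, Complex.exp_zero, one_smul]

theorem fwdDiff_iter_exp_neg_smul (l : ℂ) (g : ℝ → E) (N : ℕ) :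
    (Δ_[1])^[N] ((fun t : ℝ ↦ Complex.exp (-l * t)) • g) = (fun t : ℝ ↦ Complex.exp (-l * t)) •
      ((Complex.exp (-l) • (unitShift E - Complex.exp l • (1 : End ℂ (ℝ → E)))) ^ N) g := by
  have hsemiconj : Semiconj (fun g : ℝ → E ↦ (fun t : ℝ ↦ Complex.exp (-l * t)) • g)
      (Complex.exp (-l) • (unitShift E - Complex.exp l • (1 : End ℂ (ℝ → E)))) Δ_[1] :=
    fun g ↦ (fwdDiff_exp_neg_smul l g).symm
  rw [End.coe_pow]
  exact (hsemiconj.iterate_right N g).symm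

end UnitShift

section Analytic

variable {E : Type*} [NormedAddCommGroup E] [NormedSpace ℂ E]

theorem exists_exp_smul_periodic_polynomial {l : ℂ} {g : ℝ → E}
    (hg : ∀ x, AnalyticAt ℝ g x) (hgen : g ∈ (unitShift E).maxGenEigenspace (Complex.exp l)) :
    ∃ (d : ℕ) (π : ℕ → ℝ → E), (∀ k, Periodic (π k) 1 ∧ ∀ x, AnalyticAt ℝ (π k) x) ∧
      ∀ t : ℝ, g t = Complex.exp (l * t) • ∑ k ∈ Finset.range (d + 1), t ^ k • π k t := by
  obtain ⟨d, hd⟩ := (End.mem_maxGenEigenspace ..).1 hgen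
  have hΔ : (Δ_[1])^[d + 1] ((fun t : ℝ ↦ Complex.exp (-l * t)) • g) = 0 := by
    rw [fwdDiff_iter_exp_neg_smul, smul_pow, pow_succ' (_ - _), LinearMap.smul_apply,
      End.mul_apply, hd, map_zero, smul_zero, smul_zero]
  have hexp (x : ℝ) : AnalyticAt ℝ (fun t : ℝ ↦ Complex.exp (-l * t)) x :=
    analyticAt_cexp.restrictScalars.fun_comp
      (analyticAt_const.mul (Complex.ofRealCLM.analyticAt x))
  obtain ⟨π, hπ, hsum⟩ :=
    exists_periodic_coeff_of_fwdDiff_iter_eq_zero (fun x ↦ (hexp x).smul (hg x)) hΔ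
  refine ⟨d, π, hπ, fun t ↦ ?_⟩
  rw [← hsum, Pi.smul_apply', smul_smul, ← Complex.exp_add, neg_mul,
    add_neg_cancel, Complex.exp_zero, one_smul]

variable (E) in
/-- The complex vector space of real-analytic functions on `ℝ`. -/
def analyticSubmodule : Submodule ℂ (ℝ → E) where
  carrier := {g | ∀ x, AnalyticAt ℝ g x}
  zero_mem' _ := analyticAt_const
  add_mem' hf hg x := (hf x).add (hg x)
  smul_mem' _ _ hg x := (hg x).const_smul

theorem finiteDimensional_of_map_restrict {W : Submodule ℂ (ℝ → E)}
    (hW : W ≤ analyticSubmodule E) {K : Set ℝ} (hK : (interior K).Nonempty)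
    [FiniteDimensional ℂ (W.map (LinearMap.funLeft ℂ E ((↑) : K → ℝ)))] :
    FiniteDimensional ℂ W := by
  obtain ⟨x, hx⟩ := hK
  refine Module.Finite.of_injective ((LinearMap.funLeft ℂ E ((↑) : K → ℝ)).submoduleMap W) ?_
  intro g₁ g₂ h
  have heqOn : Set.EqOn g₁.1 g₂.1 K := fun t ht ↦ congrFun (congrArg Subtype.val h) ⟨t, ht⟩
  exact Subtype.ext <| AnalyticOnNhd.eq_of_eventuallyEq (fun t _ ↦ hW g₁.2 t)
    (fun t _ ↦ hW g₂.2 t) (heqOn.eventuallyEq_of_mem (mem_interior_iff_mem_nhds.1 hx))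

end Analytic

section ShiftInvariantSpace

theorem finite_setOf_translate_ne_zero {ι E : Type*} [Finite ι] [Zero E] {φ : ι → ℝ → E}
    (hφ : ∀ j, HasCompactSupport (φ j)) {K : Set ℝ} (hK : IsCompact K) :
    {q : ι × ℤ | ∃ t ∈ K, φ q.1 (t - q.2) ≠ 0}.Finite := by
  have hfin (j : ι) : (((↑) : ℤ → ℝ) ⁻¹' (K + -tsupport (φ j))).Finite :=
    (Int.isClosedEmbedding_coe_real.isCompact_preimage
      (hK.add (hφ j).isCompact.neg)).finite_of_discrete
  refine (Set.finite_univ.prod (Set.finite_iUnion hfin)).subset ?_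
  rintro ⟨j, ℓ⟩ ⟨t, ht, hne⟩
  exact ⟨trivial, Set.mem_iUnion.2 ⟨j, t, ht, -(t - ℓ),
    Set.neg_mem_neg.2 (subset_tsupport _ hne), by ring⟩⟩

variable {ι E : Type*} [Finite ι] [NormedAddCommGroup E] [NormedSpace ℂ E] {φ : ι → ℝ → E}

theorem summable_smul_translate (hφ : ∀ j, HasCompactSupport (φ j)) (c : ι → ℤ → ℂ) (t : ℝ) :
    Summable fun q : ι × ℤ ↦ c q.1 q.2 • φ q.1 (t - q.2) := by
  refine summable_of_hasFiniteSupport <|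
    (finite_setOf_translate_ne_zero hφ (isCompact_singleton (x := t))).subset fun q hq ↦ ?_
  exact ⟨t, rfl, right_ne_zero_of_smul hq⟩

/-- The shift-invariant space `V_Φ` generated by finitely many compactly supported functions. The
compact supports make each sum `∑'` finite, so that its junk value `0` never occurs. -/
def shiftInvariantSpace (φ : ι → ℝ → E) (hφ : ∀ j, HasCompactSupport (φ j)) :
    Submodule ℂ (ℝ → E) where
  carrier := {f | ∃ c : ι → ℤ → ℂ, ∀ t : ℝ, f t = ∑' q : ι × ℤ, c q.1 q.2 • φ q.1 (t - q.2)}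
  zero_mem' := ⟨0, fun t ↦ by simp⟩
  add_mem' := by
    rintro f g ⟨a, ha⟩ ⟨b, hb⟩
    refine ⟨a + b, fun t ↦ ?_⟩
    simp only [Pi.add_apply, ha, hb, add_smul]
    exact ((summable_smul_translate hφ a t).tsum_add (summable_smul_translate hφ b t)).symm
  smul_mem' := by
    rintro z f ⟨c, hc⟩
    refine ⟨z • c, fun t ↦ ?_⟩
    simp only [Pi.smul_apply, hc, smul_assoc]
    exact ((summable_smul_translate hφ c t).tsum_const_smul z).symm

variable (hφ : ∀ j, HasCompactSupport (φ j))

theorem unitShift_mem_shiftInvariantSpace {f : ℝ → E} (hf : f ∈ shiftInvariantSpace φ hφ) :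
    unitShift E f ∈ shiftInvariantSpace φ hφ := by
  obtain ⟨c, hc⟩ := hf
  refine ⟨fun j ℓ ↦ c j (ℓ + 1), fun t ↦ ?_⟩
  calc f (t + 1) = ∑' q : ι × ℤ, c q.1 q.2 • φ q.1 (t + 1 - q.2) := hc (t + 1)
    _ = ∑' q : ι × ℤ, c q.1 (q.2 + 1) • φ q.1 (t + 1 - (q.2 + 1 : ℤ)) :=
      (((Equiv.refl ι).prodCongr (Equiv.addRight 1)).tsum_eq _).symm
    _ = ∑' q : ι × ℤ, c q.1 (q.2 + 1) • φ q.1 (t - q.2) := by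
      simp only [Int.cast_add, Int.cast_one, add_sub_add_right_eq_sub]

theorem finiteDimensional_map_restrict_shiftInvariantSpace {K : Set ℝ} (hK : IsCompact K) :
    FiniteDimensional ℂ
      ((shiftInvariantSpace φ hφ).map (LinearMap.funLeft ℂ E ((↑) : K → ℝ))) := by
  let translates : Set (K → E) := Set.image (fun q t ↦ φ q.1 (t - q.2))
    {q : ι × ℤ | ∃ t ∈ K, φ q.1 (t - q.2) ≠ 0}
  have hfin := finite_setOf_translate_ne_zero hφ hK
  have : FiniteDimensional ℂ (Submodule.span ℂ translates) :=
    FiniteDimensional.span_of_finite ℂ (hfin.image _)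
  refine Submodule.finiteDimensional_of_le (S₂ := Submodule.span ℂ translates) ?_
  rintro _ ⟨f, ⟨c, hc⟩, rfl⟩
  have hf : LinearMap.funLeft ℂ E ((↑) : K → ℝ) f =
      ∑ q ∈ hfin.toFinset, c q.1 q.2 • fun t : K ↦ φ q.1 (t - q.2) := by
    ext t
    rw [LinearMap.funLeft_apply, hc, Finset.sum_apply]
    refine tsum_eq_sum fun q hq ↦ ?_
    have hzero : φ q.1 (t - q.2) = 0 := by
      by_contra hne
      exact hq (hfin.mem_toFinset.2 ⟨t, t.2, hne⟩)
    rw [hzero, smul_zero]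
  rw [hf]
  exact Submodule.sum_mem _ fun q hq ↦ Submodule.smul_mem _ _
    (Submodule.subset_span ⟨q, hfin.mem_toFinset.1 hq, rfl⟩)

theorem finiteDimensional_shiftInvariantSpace_inf_analyticSubmodule :
    FiniteDimensional ℂ ↥(shiftInvariantSpace φ hφ ⊓ analyticSubmodule E) := by
  have hK : (interior (Set.Icc (0 : ℝ) 1)).Nonempty := by simp
  have := finiteDimensional_map_restrict_shiftInvariantSpace hφ
    (isCompact_Icc (a := (0 : ℝ)) (b := 1))
  have := Submodule.finiteDimensional_of_le (Submodule.map_mono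
    (f := LinearMap.funLeft ℂ E ((↑) : Set.Icc (0 : ℝ) 1 → ℝ))
    (inf_le_left : shiftInvariantSpace φ hφ ⊓ analyticSubmodule E ≤ _))
  exact finiteDimensional_of_map_restrict inf_le_right hK

end ShiftInvariantSpace

theorem log_sub_log_ne_two_pi_I_mul {z w : ℂ} (hz : z ≠ 0) (hw : w ≠ 0) (hzw : z ≠ w) (k : ℤ) :
    Complex.log z - Complex.log w ≠ 2 * Real.pi * Complex.I * k := by
  intro h
  rw [← Complex.exp_log hz, ← Complex.exp_log hw] at hzw
  exact hzw (Complex.exp_eq_exp_iff_exists_int.2 ⟨k, by linear_combination h⟩)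

theorem stmt_6_general {ι E : Type*} [Finite ι] [NormedAddCommGroup E] [NormedSpace ℂ E]
    {φ : ι → ℝ → E} (hφ : ∀ j, HasCompactSupport (φ j)) {f : ℝ → E}
    (hf : ∀ x : ℝ, AnalyticAt ℝ f x) (hmem : f ∈ shiftInvariantSpace φ hφ) :
    ∃ (s : ℕ) (lam : Fin s → ℂ) (d : Fin s → ℕ) (π : Fin s → ℕ → ℝ → E),
      (∀ j m : Fin s, j ≠ m → ∀ k : ℤ, lam j - lam m ≠ 2 * Real.pi * Complex.I * k) ∧
      (∀ j : Fin s, ∀ k ≤ d j,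
        (∀ t : ℝ, π j k (t + 1) = π j k t) ∧ (∀ x : ℝ, AnalyticAt ℝ (π j k) x)) ∧
      ∀ t : ℝ, f t = ∑ j : Fin s, Complex.exp (lam j * (t : ℂ)) •
        ∑ k ∈ Finset.range (d j + 1), t ^ k • π j k t := by
  have := finiteDimensional_shiftInvariantSpace_inf_analyticSubmodule hφ
  have hinv (g) (hg : g ∈ shiftInvariantSpace φ hφ ⊓ analyticSubmodule E) :
      unitShift E g ∈ shiftInvariantSpace φ hφ ⊓ analyticSubmodule E :=
    ⟨unitShift_mem_shiftInvariantSpace hφ hg.1, analyticAt_comp_add_right hg.2 1⟩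
  obtain ⟨S, u, hS, hu, rfl⟩ :=
    exists_sum_genEigenvectors_of_injective unitShift_injective hinv ⟨hmem, hf⟩
  have hcomponent (μ) (hμ : μ ∈ S) := exists_exp_smul_periodic_polynomial (l := Complex.log μ)
    (hu μ hμ).1.2 (by simpa only [Complex.exp_log (hS μ hμ)] using (hu μ hμ).2)
  choose! d π hπ hsum using hcomponent
  let e := S.equivFin.symm
  refine ⟨S.card, fun j ↦ Complex.log (e j), fun j ↦ d (e j), fun j ↦ π (e j), fun j m hjm ↦ ?_,
    fun j k _ ↦ hπ _ (e j).2 k, fun t ↦ ?_⟩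
  · exact log_sub_log_ne_two_pi_I_mul (hS _ (e j).2) (hS _ (e m).2)
      (Subtype.coe_injective.ne (e.injective.ne hjm))
  · rw [Finset.sum_apply, ← Finset.sum_coe_sort, ← e.sum_comp]
    exact Finset.sum_congr rfl fun j _ ↦ hsum _ (e j).2 t

/-- Every analytic function `f` in the shift-invariant space generated by
compactly supported `φ_1, …, φ_n` has the form
`f(t) = Σ_{j=1}^s e^{λ_j t} Σ_{k=0}^{d_j} π_{j,k}(t)·t^k` with `λ_j` pairwise distinct modulo
`2πi` and 1-periodic analytic functions `π_{j,k}`. -/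
theorem stmt_6 (n : ℕ) (φ : Fin n → ℝ → ℂ) (hsupp : ∀ j, HasCompactSupport (φ j))
    (f : ℝ → ℂ) (hf : ∀ x : ℝ, AnalyticAt ℝ f x)
    (c : Fin n → ℤ → ℂ)
    (hmem : ∀ t : ℝ, f t = ∑' q : Fin n × ℤ, c q.1 q.2 * φ q.1 (t - (q.2 : ℝ))) :
    ∃ (s : ℕ) (lam : Fin s → ℂ) (d : Fin s → ℕ) (π : Fin s → ℕ → ℝ → ℂ),
      (∀ j m : Fin s, j ≠ m → ∀ k : ℤ, lam j - lam m ≠ 2 * Real.pi * Complex.I * k) ∧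
      (∀ j : Fin s, ∀ k ≤ d j,
        (∀ t : ℝ, π j k (t + 1) = π j k t) ∧ (∀ x : ℝ, AnalyticAt ℝ (π j k) x)) ∧
      ∀ t : ℝ, f t = ∑ j : Fin s, Complex.exp (lam j * (t : ℂ)) *
        ∑ k ∈ Finset.range (d j + 1), π j k t * (t : ℂ) ^ k := by
  simpa only [smul_eq_mul, Complex.real_smul, Complex.ofReal_pow, mul_comm (_ ^ _)] using
    stmt_6_general hsupp hf ⟨c, hmem⟩
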